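/- For every sign string S and state string J for S, any two complete executions of the growth algorithm from (S,J) have the same web tensor; i.e., the web tensor in V^S is independent of the order in which growth rules are applied. -/

import Mathlib

/-!
A tensor rule acts on consecutive tensor factors, so rules at disjoint positions commute. Bending
one leg of the merging vertex `t^-_{++}` to either side by a cup `b` gives the splitting vertex
`t^{++}_-`, and the splitting vertex with a cup attached is invariant under rotation. Together
with the interchange law these three relations imply that, whenever two growth rules overlap, one
further rule on each side leads to the same strings and to the same planar trivalent graph, hence
to the same tensor. So growth has the diamond property, compatibly with the tensors produced, and
one step always suffices to close the diamond. Therefore the first rule of one execution can be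
moved to the front of any other execution without changing the web tensor, and the theorem follows
by induction.
-/

noncomputable section

/-- The ground field `K = ℚ(v)`. -/
abbrev K : Type := RatFunc ℚ

/-- The indeterminate `v`. -/
def v : K := RatFunc.X

/-- The three states `-1, 0, 1`. -/
inductive St where
  | neg : St
  | zero : St
  | pos : St
deriving DecidableEq

instance : Fintype St where
  elems := {St.neg, St.zero, St.pos}
  complete := fun x => by cases x <;> simp

/-- The integer value of a state. -/
def stval : St → ℤ
  | .neg => -1
  | .zero => 0
  | .pos => 1

/-- The order `-1 < 0 < 1` on states. -/
def stLt (a b : St) : Prop := stval a < stval b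

/-- The weight `μ(s, j) ∈ ℤ²`; `true` is the sign `+`, `false` is `-`. -/
def wt : Bool → St → ℤ × ℤ
  | true, .pos => (1, 0)
  | true, .zero => (-1, 1)
  | true, .neg => (0, -1)
  | false, .pos => (0, 1)
  | false, .zero => (1, -1)
  | false, .neg => (-1, 0)

/-- Total weight `Σ μ(s_k, j_k)` of a sign string and a state string. -/
def wtSum (S : List Bool) (J : List St) : ℤ × ℤ :=
  ((S.zip J).map fun p => wt p.1 p.2).sum

/-- A state string is dominant if its lattice path stays in the dominant
Weyl chamber and returns to the origin. -/
def Dominant (S : List Bool) (J : List St) : Prop :=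
  J.length = S.length ∧
  (∀ k : ℕ, 0 ≤ (wtSum (S.take k) (J.take k)).1 ∧ 0 ≤ (wtSum (S.take k) (J.take k)).2) ∧
  wtSum S J = 0

/-- Coefficients of `b^{+-}(1) ∈ V⁺ ⊗ V⁻`. -/
def bCpm : St → St → K
  | .pos, .neg => 1
  | .zero, .zero => v⁻¹
  | .neg, .pos => v⁻¹ ^ 2
  | _, _ => 0

/-- Coefficients of `b^{-+}(1) ∈ V⁻ ⊗ V⁺`. -/
def bCmp : St → St → K
  | .pos, .neg => 1
  | .zero, .zero => v⁻¹
  | .neg, .pos => v⁻¹ ^ 2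
  | _, _ => 0

/-- Matrix entries of `σ_{+-} : V⁺ ⊗ V⁻ → K`. -/
def sCpm : St → St → K
  | .neg, .pos => 1
  | .zero, .zero => v
  | .pos, .neg => v ^ 2
  | _, _ => 0

/-- Matrix entries of `σ_{-+} : V⁻ ⊗ V⁺ → K`. -/
def sCmp : St → St → K
  | .neg, .pos => 1
  | .zero, .zero => v
  | .pos, .neg => v ^ 2
  | _, _ => 0

/-- `tYpp a b c` is the coefficient of `e_a ⊗ e_b` in `t^{++}_-(e_c)`. -/
def tYpp : St → St → St → K
  | .pos, .zero, .pos => 1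
  | .zero, .pos, .pos => v⁻¹
  | .pos, .neg, .zero => 1
  | .neg, .pos, .zero => v⁻¹
  | .zero, .neg, .neg => 1
  | .neg, .zero, .neg => v⁻¹
  | _, _, _ => 0

/-- `tYmm a b c` is the coefficient of `e_a ⊗ e_b` in `t^{--}_+(e_c)`. -/
def tYmm : St → St → St → K
  | .pos, .zero, .pos => 1
  | .zero, .pos, .pos => v⁻¹
  | .pos, .neg, .zero => 1
  | .neg, .pos, .zero => v⁻¹
  | .zero, .neg, .neg => 1
  | .neg, .zero, .neg => v⁻¹
  | _, _, _ => 0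

/-- `tLpp a b c` is the coefficient of `e_c` in `t^-_{++}(e_a ⊗ e_b)`. -/
def tLpp : St → St → St → K
  | .pos, .zero, .pos => v
  | .zero, .pos, .pos => 1
  | .pos, .neg, .zero => v
  | .neg, .pos, .zero => 1
  | .zero, .neg, .neg => v
  | .neg, .zero, .neg => 1
  | _, _, _ => 0

/-- `tLmm a b c` is the coefficient of `e_c` in `t^+_{--}(e_a ⊗ e_b)`. -/
def tLmm : St → St → St → K
  | .pos, .zero, .pos => v
  | .zero, .pos, .pos => 1
  | .pos, .neg, .zero => v
  | .neg, .pos, .zero => 1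
  | .zero, .neg, .neg => v
  | .neg, .zero, .neg => 1
  | _, _, _ => 0

/-- Matrix entries of the H-map
`(id_{V⁺} ⊗ t^-_{++}) ∘ (t^{++}_- ⊗ id_{V⁺}) : V⁻ ⊗ V⁺ → V⁺ ⊗ V⁻`:
`HCpm a b c d` is the coefficient of `e_a ⊗ e_b` in the image of `e_c ⊗ e_d`. -/
def HCpm (a b c d : St) : K := ∑ y : St, tYpp a y c * tLpp y d b

/-- Matrix entries of the H-map
`(t^-_{++} ⊗ id_{V⁺}) ∘ (id_{V⁺} ⊗ t^{++}_-) : V⁺ ⊗ V⁻ → V⁻ ⊗ V⁺`: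
`HCmp a b c d` is the coefficient of `e_a ⊗ e_b` in the image of `e_c ⊗ e_d`. -/
def HCmp (a b c d : St) : K := ∑ x : St, tLpp c x a * tYpp x b d

/-- State patterns of the three H-rules: `(j_k, j_{k+1})` on top, the
replacement below. -/
inductive HPat : St → St → St → St → Prop where
  | h1 : HPat .pos .zero .zero .pos
  | h2 : HPat .zero .zero .neg .pos
  | h3 : HPat .zero .neg .neg .zero

/-- State patterns of the three Y-rules. -/
inductive YPat : St → St → St → Prop where
  | y1 : YPat .pos .zero .pos
  | y2 : YPat .pos .neg .zero
  | y3 : YPat .zero .neg .neg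

/-- One application of a growth rule, rewriting `(S, J)` to `(S', J')`. -/
inductive Step : List Bool → List St → List Bool → List St → Prop where
  | hstep (A B : List Bool) (P Q : List St) (s1 s2 : Bool) (j1 j2 j1' j2' : St)
      (hl : A.length = P.length) (hs : s1 ≠ s2) (hp : HPat j1 j2 j1' j2') :
      Step (A ++ s1 :: s2 :: B) (P ++ j1 :: j2 :: Q)
        (A ++ (!s1) :: (!s2) :: B) (P ++ j1' :: j2' :: Q)
  | ustep (A B : List Bool) (P Q : List St) (s1 s2 : Bool)
      (hl : A.length = P.length) (hs : s1 ≠ s2) :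
      Step (A ++ s1 :: s2 :: B) (P ++ St.pos :: St.neg :: Q) (A ++ B) (P ++ Q)
  | ystep (A B : List Bool) (P Q : List St) (s : Bool) (j1 j2 j' : St)
      (hl : A.length = P.length) (hp : YPat j1 j2 j') :
      Step (A ++ s :: s :: B) (P ++ j1 :: j2 :: Q) (A ++ (!s) :: B) (P ++ j' :: Q)

/-- A complete execution of the growth algorithm from `(S, J)` down to the
pair of empty strings. -/
inductive Exec : List Bool → List St → Type where
  | nil : Exec [] []
  | hstep (A B : List Bool) (P Q : List St) (s1 s2 : Bool) (j1 j2 j1' j2' : St)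
      (hl : A.length = P.length) (hs : s1 ≠ s2) (hp : HPat j1 j2 j1' j2')
      (e : Exec (A ++ (!s1) :: (!s2) :: B) (P ++ j1' :: j2' :: Q)) :
      Exec (A ++ s1 :: s2 :: B) (P ++ j1 :: j2 :: Q)
  | ustep (A B : List Bool) (P Q : List St) (s1 s2 : Bool)
      (hl : A.length = P.length) (hs : s1 ≠ s2)
      (e : Exec (A ++ B) (P ++ Q)) :
      Exec (A ++ s1 :: s2 :: B) (P ++ St.pos :: St.neg :: Q)
  | ystep (A B : List Bool) (P Q : List St) (s : Bool) (j1 j2 j' : St)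
      (hl : A.length = P.length) (hp : YPat j1 j2 j')
      (e : Exec (A ++ (!s) :: B) (P ++ j' :: Q)) :
      Exec (A ++ s :: s :: B) (P ++ j1 :: j2 :: Q)

/-- The web tensor of an execution, as coordinates with respect to the basis
`e^S_J` of `V^S`: `web e L` is the coefficient of `e^S_L`. -/
def web : {S : List Bool} → {J : List St} → Exec S J → List St → K
  | _, _, .nil, L => if L = [] then 1 else 0
  | _, _, .hstep A _ _ _ s1 _ _ _ _ _ _ _ _ e, L =>
      match L.drop A.length with
      | a :: b :: R =>
          ∑ c : St, ∑ d : St,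
            (if s1 then HCpm a b c d else HCmp a b c d) *
              web e (L.take A.length ++ c :: d :: R)
      | _ => 0
  | _, _, .ustep A _ _ _ s1 _ _ _ e, L =>
      match L.drop A.length with
      | a :: b :: R => (if s1 then bCpm a b else bCmp a b) * web e (L.take A.length ++ R)
      | _ => 0
  | _, _, .ystep A _ _ _ s _ _ _ _ _ e, L =>
      match L.drop A.length with
      | a :: b :: R =>
          ∑ c : St, (if s then tYpp a b c else tYmm a b c) * web e (L.take A.length ++ c :: R)
      | _ => 0

/-- `c ∈ v⁻¹ ℤ[v⁻¹]`: a polynomial in `v⁻¹` with zero constant term. -/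
def ZeroConst (c : K) : Prop :=
  ∃ p : Polynomial ℤ, p.coeff 0 = 0 ∧ c = Polynomial.aeval v⁻¹ p

/-- `x` has the negative-exponent property relative to a state string `J`
(`n` is the length of the ambient sign string). -/
def NegExpProp (n : ℕ) (x : List St → K) (J : List St) : Prop :=
  x J = 1 ∧ ∀ J' : List St, J'.length = n → J' ≠ J → ZeroConst (x J')

/-- `c ∈ ℕ[v, v⁻¹]`: a Laurent polynomial with nonnegative integer
coefficients. -/
def IsNatLaurent (c : K) : Prop :=
  ∃ (p : Polynomial ℕ) (m : ℕ), c = v⁻¹ ^ m * Polynomial.aeval v p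

/-- `c ∈ ℤ[v⁻¹]`. -/
def InZInv (c : K) : Prop := ∃ p : Polynomial ℤ, c = Polynomial.aeval v⁻¹ p

/-- Property P: all coefficients lie in `ℤ[v⁻¹]` and at most one of them has a
nonzero constant term. -/
def PropP (n : ℕ) (x : List St → K) : Prop :=
  (∀ J : List St, J.length = n → InZInv (x J)) ∧
  ∀ J1 J2 : List St, J1.length = n → J2.length = n →
    ¬ ZeroConst (x J1) → ¬ ZeroConst (x J2) → J1 = J2

/-- The sign string `(+,+,−,−,+,+,−,−,+,+,−,−)`. -/
def base : List Bool :=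
  [true, true, false, false, true, true, false, false, true, true, false, false]


/-! ### Operators on strings of tensor factors -/

/-- Linear operators on tensors over a free module with basis `ι`. A tensor is encoded by its
coordinates, a function of strings of basis labels, so that all tensor degrees are treated at
once. -/
abbrev TensorOp (ι R : Type*) [CommSemiring R] : Type _ :=
  Module.End R (List ι → R)

namespace TensorOp

variable {ι R : Type*} [CommSemiring R]

/-- The contraction `⟨e_a^*, ·⟩ ⊗ id` of the first tensor factor with a dual basis vector. -/
def slice (a : ι) : TensorOp ι R :=
  LinearMap.funLeft R R (List.cons a)

/-- The operator `∑ a, e_a ⊗ φ a`, which creates a new first tensor factor. Its values have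
coordinate `0` at the empty string. -/
def ofSlices (φ : ι → TensorOp ι R) : TensorOp ι R :=
  LinearMap.pi fun
    | [] => 0
    | a :: L => LinearMap.proj L ∘ₗ φ a

@[simp]
lemma slice_apply (a : ι) (f : List ι → R) (L : List ι) : slice a f L = f (a :: L) := rfl

@[simp]
lemma ofSlices_apply_nil (φ : ι → TensorOp ι R) (f : List ι → R) : ofSlices φ f [] = 0 := rfl

@[simp]
lemma ofSlices_apply_cons (φ : ι → TensorOp ι R) (f : List ι → R) (a : ι) (L : List ι) :
    ofSlices φ f (a :: L) = φ a f L := rfl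

lemma slice_mul_ofSlices (a : ι) (φ : ι → TensorOp ι R) : slice a * ofSlices φ = φ a := rfl

lemma ofSlices_mul (φ : ι → TensorOp ι R) (g : TensorOp ι R) :
    ofSlices φ * g = ofSlices fun a => φ a * g := by
  ext f (_ | ⟨a, L⟩) <;> rfl

/-- The operator `id ⊗ g`. It is not unital: `shift 1` vanishes at the empty string. -/
def shift : TensorOp ι R →ₙ* TensorOp ι R where
  toFun g := ofSlices fun a => g * slice a
  map_mul' g h := by simp only [ofSlices_mul, mul_assoc, slice_mul_ofSlices]

lemma shift_apply (g : TensorOp ι R) : shift g = ofSlices fun a => g * slice a := rfl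

lemma shift_mul_ofSlices (g : TensorOp ι R) (φ : ι → TensorOp ι R) :
    shift g * ofSlices φ = ofSlices fun a => g * φ a := by
  simp only [shift_apply, ofSlices_mul, mul_assoc, slice_mul_ofSlices]

lemma iterate_shift_apply {g : TensorOp ι R} (hg : ∀ f, g f [] = 0) (n : ℕ) (f : List ι → R)
    (L : List ι) :
    shift^[n] g f L = g (fun M => f (L.take n ++ M)) (L.drop n) := by
  induction n generalizing f L with
  | zero => rfl
  | succ n ih =>
    rw [Function.iterate_succ_apply', shift_apply]
    cases L with
    | nil => simp [hg]
    | cons a L => exact ih _ L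

/-- Operators turning the first `k` tensor factors into `m` factors. That they leave the remaining
factors alone is encoded as commutation with all operators on those. -/
def localOps (m k : ℕ) : Submodule R (TensorOp ι R) where
  carrier := {g | ∀ h, g * shift^[k] h = shift^[m] h * g}
  add_mem' hg hg' _ := by rw [add_mul, mul_add, hg, hg']
  zero_mem' _ := by rw [zero_mul, mul_zero]
  smul_mem' _ _ hg _ := by rw [smul_mul_assoc, mul_smul_comm, hg]

lemma localOps_le_add (m k j : ℕ) :
    (localOps m k : Submodule R (TensorOp ι R)) ≤ localOps (m + j) (k + j) := fun _ hg _ => by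
  rw [Function.iterate_add_apply, Function.iterate_add_apply, hg]

lemma mul_mem_localOps {m k l : ℕ} {g h : TensorOp ι R} (hg : g ∈ localOps m k)
    (hh : h ∈ localOps k l) : g * h ∈ localOps m l := fun _ => by
  rw [mul_assoc, hh, ← mul_assoc, hg, mul_assoc]

lemma shift_mem_localOps {m k : ℕ} {g : TensorOp ι R} (hg : g ∈ localOps m k) :
    shift g ∈ localOps (m + 1) (k + 1) := fun h => by
  rw [Function.iterate_succ_apply', Function.iterate_succ_apply', ← map_mul, hg, map_mul]

lemma one_mem_localOps : (1 : TensorOp ι R) ∈ localOps 0 0 := fun h => by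
  rw [one_mul, mul_one]

lemma slice_mem_localOps (a : ι) : (slice a : TensorOp ι R) ∈ localOps 0 1 := fun _ =>
  slice_mul_ofSlices a _

lemma ofSlices_mem_localOps {m k : ℕ} {φ : ι → TensorOp ι R} (hφ : ∀ a, φ a ∈ localOps m k) :
    ofSlices φ ∈ localOps (m + 1) k := fun h => by
  rw [Function.iterate_succ_apply', shift_mul_ofSlices, ofSlices_mul]
  exact congrArg ofSlices (funext fun a => hφ a h)

/-! ### Planar trivalent graphs -/

/-- The operator `(∑ b a c • e_a ⊗ e_c) ⊗ id` inserting two tensor factors. -/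
def cup (b : ι → ι → R) : TensorOp ι R :=
  ofSlices fun a => ofSlices fun c => b a c • 1

lemma cup_mem_localOps (b : ι → ι → R) : cup b ∈ localOps 2 0 :=
  ofSlices_mem_localOps fun _ => ofSlices_mem_localOps fun _ =>
    Submodule.smul_mem _ _ one_mem_localOps

@[simp]
lemma cup_apply_cons_cons (b : ι → ι → R) (f : List ι → R) (a c : ι) (L : List ι) :
    cup b f (a :: c :: L) = b a c * f L := rfl

section Generators

variable [Fintype ι]

/-- The operator `(e_x ↦ ∑ t a c x • e_a ⊗ e_c) ⊗ id` splitting the first tensor factor. -/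
def fork (t : ι → ι → ι → R) : TensorOp ι R :=
  ofSlices fun a => ofSlices fun c => ∑ x, t a c x • slice x

/-- The operator `(e_a ⊗ e_c ↦ ∑ m a c x • e_x) ⊗ id` merging the first two tensor factors. -/
def merge (m : ι → ι → ι → R) : TensorOp ι R :=
  ofSlices fun x => ∑ a, ∑ c, m a c x • (slice c * slice a)

lemma fork_mem_localOps (t : ι → ι → ι → R) : fork t ∈ localOps 2 1 :=
  ofSlices_mem_localOps fun _ => ofSlices_mem_localOps fun _ =>
    Submodule.sum_mem _ fun x _ => Submodule.smul_mem _ _ (slice_mem_localOps x)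

lemma merge_mem_localOps (m : ι → ι → ι → R) : merge m ∈ localOps 1 2 :=
  ofSlices_mem_localOps fun _ => Submodule.sum_mem _ fun a _ => Submodule.sum_mem _ fun c _ =>
    Submodule.smul_mem _ _ <| mul_mem_localOps (slice_mem_localOps c)
      (localOps_le_add 0 1 1 (slice_mem_localOps a))

@[simp]
lemma fork_apply_cons_cons (t : ι → ι → ι → R) (f : List ι → R) (a c : ι) (L : List ι) :
    fork t f (a :: c :: L) = ∑ x, t a c x * f (x :: L) := by
  simp [fork]

@[simp]
lemma merge_apply_cons (m : ι → ι → ι → R) (f : List ι → R) (x : ι) (L : List ι) :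
    merge m f (x :: L) = ∑ a, ∑ c, m a c x * f (a :: c :: L) := by
  simp [merge]

lemma shift_merge_mul_fork_apply (m t : ι → ι → ι → R) (f : List ι → R) (a b : ι) (L : List ι) :
    (shift (merge m) * fork t) f (a :: b :: L) =
      ∑ c, ∑ d, (∑ y, t a y c * m y d b) * f (c :: d :: L) := by
  simp only [shift_apply, Module.End.mul_apply, ofSlices_apply_cons, merge_apply_cons, slice_apply,
    fork_apply_cons_cons, Finset.mul_sum, Finset.sum_mul]
  rw [Finset.sum_comm_cycle]
  refine Finset.sum_congr rfl fun c _ => ?_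
  rw [Finset.sum_comm]
  simp only [mul_assoc, mul_left_comm]

lemma merge_mul_shift_fork_apply (m t : ι → ι → ι → R) (f : List ι → R) (a b : ι) (L : List ι) :
    (merge m * shift (fork t)) f (a :: b :: L) =
      ∑ c, ∑ d, (∑ x, m c x a * t x b d) * f (c :: d :: L) := by
  simp only [shift_apply, Module.End.mul_apply, ofSlices_apply_cons, merge_apply_cons, slice_apply,
    fork_apply_cons_cons, Finset.mul_sum, Finset.sum_mul, mul_assoc]
  exact Finset.sum_congr rfl fun c _ => Finset.sum_comm

lemma fork_mul_cup {t : ι → ι → ι → R} {b : ι → ι → R}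
    (h : ∀ a c d, ∑ x, t a c x * b x d = ∑ x, t c d x * b a x) :
    fork t * cup b = shift (fork t) * cup b := by
  ext f (_ | ⟨a, _ | ⟨c, _ | ⟨d, L⟩⟩⟩)
  · rfl
  · rfl
  · simp [shift_apply, fork, cup]
  · simp [shift_apply, ← mul_assoc, ← Finset.sum_mul, h]

lemma shift_merge_mul_cup {m t : ι → ι → ι → R} {b : ι → ι → R}
    (h : ∀ a c x, ∑ y, b a y * m y x c = t a c x) :
    shift (merge m) * cup b = fork t := by
  ext f (_ | ⟨a, _ | ⟨c, L⟩⟩)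
  · rfl
  · rfl
  · simp only [shift_apply, Module.End.mul_apply, ofSlices_apply_cons, merge_apply_cons,
      slice_apply, cup_apply_cons_cons, fork_apply_cons_cons, ← h, Finset.sum_mul]
    rw [Finset.sum_comm]
    simp only [mul_assoc, mul_left_comm]

lemma merge_mul_shift_cup {m t : ι → ι → ι → R} {b : ι → ι → R}
    (h : ∀ a c x, ∑ y, m x y a * b y c = t a c x) :
    merge m * shift (cup b) = fork t := by
  ext f (_ | ⟨a, _ | ⟨c, L⟩⟩)
  · rfl
  · simp [shift_apply, fork, cup]
  · simp only [shift_apply, Module.End.mul_apply, ofSlices_apply_cons, merge_apply_cons,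
      slice_apply, cup_apply_cons_cons, fork_apply_cons_cons, ← h, Finset.sum_mul,
      mul_assoc]

end Generators

/-- The H-shaped graphs joining a splitting vertex `Y` and a merging vertex `M`: the maps of the
H-rules with first sign `+` and `-`. -/
def ladder (Y M : TensorOp ι R) : Bool → TensorOp ι R
  | true => shift M * Y
  | false => M * shift Y

/-- A cup `U`, a splitting vertex `Y` and a merging vertex `M` whose composites depend on planar
trivalent graphs only up to rotating `Y` and bending a leg of `M`. -/
structure IsTrivalent (U Y M : TensorOp ι R) : Prop where
  cup_mem : U ∈ localOps 2 0
  fork_mem : Y ∈ localOps 2 1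
  merge_mem : M ∈ localOps 1 2
  rotate : Y * U = shift Y * U
  bend_left : shift M * U = Y
  bend_right : M * shift U = Y

namespace IsTrivalent

variable {U Y M : TensorOp ι R} (h : IsTrivalent U Y M)
include h

lemma cup_mul (g : TensorOp ι R) : U * g = shift (shift g) * U := h.cup_mem g

lemma fork_mul_shift (g : TensorOp ι R) : Y * shift g = shift (shift g) * Y := h.fork_mem g

lemma merge_mul_shift (g : TensorOp ι R) : M * shift (shift g) = shift g * M := h.merge_mem g

lemma ladder_mem_localOps (s : Bool) : ladder Y M s ∈ localOps 2 2 :=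
  match s with
  | true => mul_mem_localOps (shift_mem_localOps h.merge_mem) (localOps_le_add 2 1 1 h.fork_mem)
  | false => mul_mem_localOps (localOps_le_add 1 2 1 h.merge_mem) (shift_mem_localOps h.fork_mem)

lemma fork_mul_fork (s : Bool) : Y * Y = shift (ladder Y M s) * U := by
  symm
  cases s with
  | true =>
    calc shift (shift M * Y) * U = shift (shift M) * (shift Y * U) := by rw [map_mul, mul_assoc]
      _ = shift (shift M) * Y * U := by rw [← h.rotate, mul_assoc]
      _ = Y * (shift M * U) := by rw [← h.fork_mul_shift, mul_assoc]
      _ = Y * Y := by rw [h.bend_left]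
  | false =>
    calc shift (M * shift Y) * U = shift M * (shift (shift Y) * U) := by rw [map_mul, mul_assoc]
      _ = shift M * U * Y := by rw [← h.cup_mul, mul_assoc]
      _ = Y * Y := by rw [h.bend_left]

lemma ladder_mul_shift_cup (s : Bool) : ladder Y M s * shift U = shift Y * Y := by
  cases s with
  | true =>
    calc shift M * Y * shift U = shift (M * shift U) * Y := by
          rw [mul_assoc, h.fork_mul_shift, map_mul, mul_assoc]
      _ = shift Y * Y := by rw [h.bend_right]
  | false =>
    calc M * shift Y * shift U = M * shift (Y * U) := by rw [map_mul, mul_assoc]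
      _ = M * shift (shift Y) * shift U := by rw [h.rotate, map_mul, mul_assoc]
      _ = shift Y * (M * shift U) := by rw [h.merge_mul_shift, mul_assoc]
      _ = shift Y * Y := by rw [h.bend_right]

lemma ladder_mul_shift_fork (s : Bool) :
    ladder Y M s * shift Y = shift (ladder Y M !s) * Y := by
  cases s with
  | true =>
    calc shift M * Y * shift Y = shift M * (shift (shift Y) * Y) := by
          rw [mul_assoc, h.fork_mul_shift]
      _ = shift (M * shift Y) * Y := by rw [map_mul, mul_assoc]
  | false =>
    calc M * shift Y * shift Y = M * shift (Y * Y) := by rw [map_mul, mul_assoc]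
      _ = M * shift (shift (ladder Y M true)) * shift U := by
          rw [h.fork_mul_fork true, map_mul, mul_assoc]
      _ = shift (ladder Y M true) * (M * shift U) := by rw [h.merge_mul_shift, mul_assoc]
      _ = shift (ladder Y M true) * Y := by rw [h.bend_right]

end IsTrivalent

end TensorOp

/-! ### Labelled rewriting -/

section LabelledRewriting

variable {α M β : Type*} [Semigroup M] [SemigroupAction M β]

/-- For two labelled steps from a common source, to `y` with label `g` and to `y'` with label `g'`:
either they coincide, or one further step on each side leads to a common target with equal products
of labels. -/
def Joinable (r : α → α → M → Prop) (y y' : α) (g g' : M) : Prop :=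
  (y = y' ∧ g = g') ∨ ∃ z h h', r y z h ∧ r y' z h' ∧ g * h = g' * h'

lemma Joinable.symm {r : α → α → M → Prop} {y y' : α} {g g' : M} (h : Joinable r y y' g g') :
    Joinable r y' y g' g := by
  rcases h with ⟨rfl, rfl⟩ | ⟨z, k, k', hk, hk', e⟩
  · exact .inl ⟨rfl, rfl⟩
  · exact .inr ⟨z, k', k, hk', hk, e.symm⟩

/-- Any two labelled steps from a common source are joinable. -/
def LabelledDiamond (r : α → α → M → Prop) : Prop :=
  ∀ ⦃x y₁ y₂ g₁ g₂⦄, r x y₁ g₁ → r x y₂ g₂ → Joinable r y₁ y₂ g₁ g₂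

/-- `Evaluates r x₀ b₀ x b`: some sequence of labelled steps leads from `x` to `x₀`, and the product
of its labels maps `b₀` to `b`. -/
inductive Evaluates (r : α → α → M → Prop) (x₀ : α) (b₀ : β) : α → β → Prop
  | refl : Evaluates r x₀ b₀ x₀ b₀
  | step {x y : α} {g : M} {b : β} (h : r x y g) (hb : Evaluates r x₀ b₀ y b) :
      Evaluates r x₀ b₀ x (g • b)

namespace Evaluates

variable {r : α → α → M → Prop} {x₀ x y : α} {b₀ b b' : β} {g : M}

lemma exchange (hr : LabelledDiamond r) (h₀ : ∀ y g, ¬ r x₀ y g) (hb : Evaluates r x₀ b₀ x b)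
    (h : r x y g) : ∃ b', Evaluates r x₀ b₀ y b' ∧ b = g • b' := by
  induction hb generalizing y g with
  | refl => exact absurd h (h₀ y g)
  | step hfirst hrest ih =>
    rcases hr hfirst h with ⟨rfl, rfl⟩ | ⟨z, k, k', hk, hk', e⟩
    · exact ⟨_, hrest, rfl⟩
    · obtain ⟨b', hb', rfl⟩ := ih hk
      exact ⟨k' • b', .step hk' hb', by rw [← mul_smul, e, mul_smul]⟩

theorem unique (hr : LabelledDiamond r) (h₀ : ∀ y g, ¬ r x₀ y g) (hb : Evaluates r x₀ b₀ x b)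
    (hb' : Evaluates r x₀ b₀ x b') : b = b' := by
  induction hb generalizing b' with
  | refl =>
    cases hb' with
    | refl => rfl
    | step h _ => exact absurd h (h₀ _ _)
  | step h _ ih =>
    obtain ⟨b'', hb'', rfl⟩ := hb'.exchange hr h₀ h
    rw [ih hb'']

end Evaluates

end LabelledRewriting

/-! ### The growth rules -/

open TensorOp

/-- The map `b`, whose coefficients do not depend on the signs. -/
def webCup : TensorOp St K := cup bCpm

/-- The splitting map `t`, whose coefficients do not depend on the signs. -/
def webFork : TensorOp St K := fork tYpp

/-- The merging map `t^-_{++}`. -/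
def webMerge : TensorOp St K := merge tLpp

/-- The map of an H-rule with first sign `s`. -/
def webLadder (s : Bool) : TensorOp St K := ladder webFork webMerge s

lemma v_ne_zero : v ≠ 0 := RatFunc.X_ne_zero

lemma sum_St {A : Type*} [AddCommMonoid A] (φ : St → A) :
    ∑ c, φ c = φ .neg + (φ .zero + φ .pos) := by
  simp [Finset.univ, Fintype.elems]

lemma sum_tYpp_mul_bCpm (a c d : St) :
    ∑ x, tYpp a c x * bCpm x d = ∑ x, tYpp c d x * bCpm a x := by
  cases a <;> cases c <;> cases d <;> simp [sum_St, tYpp, bCpm, sq]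

lemma sum_bCpm_mul_tLpp (a c x : St) : ∑ y, bCpm a y * tLpp y x c = tYpp a c x := by
  have := v_ne_zero
  cases a <;> cases c <;> cases x <;> simp [sum_St, tYpp, tLpp, bCpm, sq, this]

lemma sum_tLpp_mul_bCpm (a c x : St) : ∑ y, tLpp x y a * bCpm y c = tYpp a c x := by
  have := v_ne_zero
  cases a <;> cases c <;> cases x <;> simp [sum_St, tYpp, tLpp, bCpm, sq, this]

lemma isTrivalent_web : IsTrivalent webCup webFork webMerge where
  cup_mem := cup_mem_localOps _
  fork_mem := fork_mem_localOps _
  merge_mem := merge_mem_localOps _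
  rotate := fork_mul_cup sum_tYpp_mul_bCpm
  bend_left := shift_merge_mul_cup sum_bCpm_mul_tLpp
  bend_right := merge_mul_shift_cup sum_tLpp_mul_bCpm

/-- A boundary point carrying a sign and a state. -/
abbrev Pt : Type := Bool × St

/-- `LocalRule p q T g`: a growth rule replaces the adjacent points `p, q` by the string `T`, and
`g` is the map attached to it. -/
inductive LocalRule : Pt → Pt → List Pt → TensorOp St K → Prop
  | cup (s : Bool) : LocalRule (s, .pos) (!s, .neg) [] webCup
  | fork (s : Bool) {i j k : St} (h : YPat i j k) : LocalRule (s, i) (s, j) [(!s, k)] webFork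
  | ladder (s : Bool) {i j i' j' : St} (h : HPat i j i' j') :
      LocalRule (s, i) (!s, j) [(!s, i'), (s, j')] (webLadder s)

/-- `GrowthStep X Y g`: a growth rule rewrites `X` to `Y`, and `g` maps tensors over `Y` to tensors
over `X`. -/
inductive GrowthStep : List Pt → List Pt → TensorOp St K → Prop
  | head {p q : Pt} {T : List Pt} {g : TensorOp St K} (h : LocalRule p q T g) (X : List Pt) :
      GrowthStep (p :: q :: X) (T ++ X) g
  | tail (p : Pt) {X Y : List Pt} {g : TensorOp St K} (h : GrowthStep X Y g) :
      GrowthStep (p :: X) (p :: Y) (shift g)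

lemma LocalRule.mem_localOps {p q : Pt} {T : List Pt} {g : TensorOp St K} (h : LocalRule p q T g) :
    g ∈ localOps 2 T.length := by
  cases h with
  | cup => exact isTrivalent_web.cup_mem
  | fork => exact isTrivalent_web.fork_mem
  | ladder s => exact isTrivalent_web.ladder_mem_localOps s

lemma LocalRule.state_ne_neg {p q : Pt} {T : List Pt} {g : TensorOp St K}
    (h : LocalRule p q T g) : p.2 ≠ .neg := by
  rcases h with _ | ⟨_, ⟨⟩⟩ | ⟨_, ⟨⟩⟩ <;> nofun

lemma LocalRule.unique {p q : Pt} {T T' : List Pt} {g g' : TensorOp St K} (h : LocalRule p q T g)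
    (h' : LocalRule p q T' g') : T = T' ∧ g = g' := by
  obtain ⟨s, i⟩ := p
  cases h with
  | cup s => cases s <;> rcases h' with _ | _ | ⟨_, ⟨⟩⟩ <;> exact ⟨rfl, rfl⟩
  | fork s hY =>
    cases s <;> rcases h' with _ | ⟨_, hY'⟩ | _ <;> cases hY <;> cases hY' <;> exact ⟨rfl, rfl⟩
  | ladder s hH =>
    cases s <;> rcases h' with _ | _ | ⟨_, hH'⟩ <;> cases hH <;> cases hH' <;> exact ⟨rfl, rfl⟩

lemma GrowthStep.append_left (A : List Pt) {X Y : List Pt} {g : TensorOp St K}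
    (h : GrowthStep X Y g) : GrowthStep (A ++ X) (A ++ Y) (shift^[A.length] g) := by
  induction A with
  | nil => exact h
  | cons p A ih =>
    rw [List.length_cons, Function.iterate_succ_apply']
    exact .tail p ih

lemma not_growthStep_nil (Y : List Pt) (g : TensorOp St K) : ¬ GrowthStep [] Y g := nofun

section Overlaps

variable {i j k : St}

lemma joinable_fork_fork (s : Bool) {x y : St} (h : YPat i j x) (h' : YPat j k y) (X : List Pt) :
    Joinable GrowthStep ((!s, x) :: (s, k) :: X) ((s, i) :: (!s, y) :: X)
      webFork (shift webFork) := by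
  obtain ⟨rfl, rfl, rfl, rfl⟩ : i = .pos ∧ x = .pos ∧ k = .neg ∧ y = .neg := by
    cases h <;> cases h'
    exact ⟨rfl, rfl, rfl, rfl⟩
  have hleft : LocalRule (!s, .pos) (s, .neg) [] webCup := by simpa using LocalRule.cup !s
  exact .inr ⟨X, _, _, .head hleft X, .head (.cup s) X, isTrivalent_web.rotate⟩

lemma joinable_fork_ladder (s : Bool) {x j' k' : St} (h : YPat i j x) (h' : HPat j k j' k')
    (X : List Pt) :
    Joinable GrowthStep ((!s, x) :: (!s, k) :: X) ((s, i) :: (!s, j') :: (s, k') :: X)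
      webFork (shift (webLadder s)) := by
  obtain ⟨rfl, rfl, hY⟩ : i = .pos ∧ j' = .neg ∧ YPat x k k' := by
    cases h <;> cases h' <;> exact ⟨rfl, rfl, by constructor⟩
  have hleft : LocalRule (!s, x) (!s, k) [(s, k')] webFork := by simpa using LocalRule.fork (!s) hY
  exact .inr ⟨(s, k') :: X, _, _, .head hleft X, .head (.cup s) _,
    isTrivalent_web.fork_mul_fork s⟩

lemma joinable_ladder_fork (s : Bool) {i' j' y : St} (h : HPat i j i' j') (h' : YPat j k y)
    (X : List Pt) :
    Joinable GrowthStep ((!s, i') :: (s, j') :: (!s, k) :: X) ((s, i) :: (s, y) :: X)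
      (webLadder s) (shift webFork) := by
  obtain ⟨rfl, rfl, hY⟩ : j' = .pos ∧ k = .neg ∧ YPat i y i' := by
    cases h <;> cases h' <;> exact ⟨rfl, rfl, by constructor⟩
  exact .inr ⟨(!s, i') :: X, _, _, .tail _ (.head (.cup s) X), .head (.fork s hY) X,
    isTrivalent_web.ladder_mul_shift_cup s⟩

lemma joinable_ladder_ladder (s : Bool) {i' j' j'' k' : St} (h : HPat i j i' j')
    (h' : HPat j k j'' k') (X : List Pt) :
    Joinable GrowthStep ((!s, i') :: (s, j') :: (s, k) :: X) ((s, i) :: (s, j'') :: (!s, k') :: X)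
      (webLadder s) (shift (webLadder !s)) := by
  obtain ⟨hleft, hright⟩ : YPat j' k k' ∧ YPat i j'' i' := by
    cases h <;> cases h' <;> exact ⟨by constructor, by constructor⟩
  exact .inr ⟨(!s, i') :: (!s, k') :: X, _, _, .tail _ (.head (.fork s hleft) X),
    .head (.fork s hright) _, isTrivalent_web.ladder_mul_shift_fork s⟩

end Overlaps

lemma joinable_of_overlap {p q r : Pt} {T T' : List Pt} {g g' : TensorOp St K}
    (h : LocalRule p q T g) (h' : LocalRule q r T' g') (X : List Pt) :
    Joinable GrowthStep (T ++ r :: X) (p :: (T' ++ X)) g (shift g') := by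
  cases h with
  | cup s => exact absurd rfl h'.state_ne_neg
  | fork s hY =>
    cases h' with
    | cup => cases hY
    | fork _ hY' => exact joinable_fork_fork s hY hY' X
    | ladder _ hH => exact joinable_fork_ladder s hY hH X
  | ladder s hH =>
    cases h' with
    | cup => exact absurd hH nofun
    | fork _ hY => simpa using joinable_ladder_fork s hH hY X
    | ladder _ hH' => simpa using joinable_ladder_ladder s hH hH' X

lemma joinable_of_disjoint {p q : Pt} {T X Y : List Pt} {g g' : TensorOp St K}
    (h : LocalRule p q T g) (h' : GrowthStep X Y g') :
    Joinable GrowthStep (T ++ X) (p :: q :: Y) g (shift (shift g')) :=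
  .inr ⟨T ++ Y, _, g, h'.append_left T, .head h Y, h.mem_localOps g'⟩

lemma LocalRule.joinable_head {p q : Pt} {T X Y : List Pt} {g g' : TensorOp St K}
    (h : LocalRule p q T g) (h' : GrowthStep (p :: q :: X) Y g') :
    Joinable GrowthStep (T ++ X) Y g g' := by
  rcases h' with ⟨h', _⟩ | ⟨_, ⟨h', _⟩ | ⟨_, h'⟩⟩
  · obtain ⟨rfl, rfl⟩ := h.unique h'
    exact .inl ⟨rfl, rfl⟩
  · exact joinable_of_overlap h h' _
  · exact joinable_of_disjoint h h'

theorem growthStep_diamond : LabelledDiamond GrowthStep := by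
  intro X Y Y' g g' h h'
  induction h generalizing Y' g' with
  | head h X => exact h.joinable_head h'
  | tail p h ih =>
    rcases h' with ⟨h', _⟩ | ⟨_, h'⟩
    · exact (h'.joinable_head (.tail p h)).symm
    · rcases ih h' with ⟨rfl, rfl⟩ | ⟨Z, k, k', hk, hk', e⟩
      · exact .inl ⟨rfl, rfl⟩
      · exact .inr ⟨p :: Z, shift k, shift k', .tail p hk, .tail p hk', by
          rw [← map_mul, e, map_mul]⟩

/-! ### Web tensors of executions -/

lemma bCmp_eq_bCpm : bCmp = bCpm := by
  ext a c
  cases a <;> cases c <;> rfl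

lemma tYmm_eq_tYpp : tYmm = tYpp := by
  ext a c x
  cases a <;> cases c <;> cases x <;> rfl

lemma webLadder_apply_cons_cons (s : Bool) (f : List St → K) (a b : St) (L : List St) :
    webLadder s f (a :: b :: L) =
      ∑ c, ∑ d, (if s then HCpm a b c d else HCmp a b c d) * f (c :: d :: L) := by
  cases s with
  | true => exact shift_merge_mul_fork_apply tLpp tYpp f a b L
  | false => exact merge_mul_shift_fork_apply tLpp tYpp f a b L

lemma webLadder_apply_singleton (s : Bool) (f : List St → K) (a : St) : webLadder s f [a] = 0 := by
  cases s with
  | true => rfl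
  | false => simp [webLadder, ladder, shift_apply, webFork, webMerge, fork]

lemma webCup_apply_nil (f : List St → K) : webCup f [] = 0 := rfl

lemma webFork_apply_nil (f : List St → K) : webFork f [] = 0 := rfl

lemma webLadder_apply_nil (s : Bool) (f : List St → K) : webLadder s f [] = 0 := by
  cases s <;> rfl

/-- `IsWebTensor X f`: some complete execution from `X` has web tensor `f`. -/
def IsWebTensor (X : List Pt) (f : List St → K) : Prop :=
  Evaluates GrowthStep [] (fun L : List St => if L = [] then (1 : K) else 0) X f

lemma IsWebTensor.unique {X : List Pt} {f f' : List St → K} (h : IsWebTensor X f)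
    (h' : IsWebTensor X f') : f = f' :=
  Evaluates.unique growthStep_diamond not_growthStep_nil h h'

section Executions

variable {A B : List Bool} {P Q : List St} {s s1 s2 : Bool} {j1 j2 j1' j2' j' : St}
  (hl : A.length = P.length)

lemma web_hstep (hs : s1 ≠ s2) (hp : HPat j1 j2 j1' j2')
    (e : Exec (A ++ (!s1) :: (!s2) :: B) (P ++ j1' :: j2' :: Q)) :
    web (.hstep A B P Q s1 s2 j1 j2 j1' j2' hl hs hp e) =
      shift^[A.length] (webLadder s1) (web e) := by
  ext L
  rw [web, iterate_shift_apply (webLadder_apply_nil s1)]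
  rcases L.drop A.length with _ | ⟨a, _ | ⟨b, R⟩⟩
  · cases s1 <;> rfl
  · exact (webLadder_apply_singleton s1 _ a).symm
  · exact (webLadder_apply_cons_cons s1 (fun M => web e (L.take A.length ++ M)) a b R).symm

lemma web_ustep (hs : s1 ≠ s2) (e : Exec (A ++ B) (P ++ Q)) :
    web (.ustep A B P Q s1 s2 hl hs e) = shift^[A.length] webCup (web e) := by
  ext L
  rw [web, iterate_shift_apply webCup_apply_nil]
  rcases L.drop A.length with _ | ⟨a, _ | ⟨b, R⟩⟩
  · rfl
  · rfl
  · simp [bCmp_eq_bCpm, webCup]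

lemma web_ystep (hp : YPat j1 j2 j') (e : Exec (A ++ (!s) :: B) (P ++ j' :: Q)) :
    web (.ystep A B P Q s j1 j2 j' hl hp e) = shift^[A.length] webFork (web e) := by
  ext L
  rw [web, iterate_shift_apply webFork_apply_nil]
  rcases L.drop A.length with _ | ⟨a, _ | ⟨b, R⟩⟩
  · rfl
  · rfl
  · simp [tYmm_eq_tYpp, webFork]

include hl in
lemma LocalRule.growthStep_zip {g : TensorOp St K} {S : List Bool} {J : List St}
    (h : LocalRule (s1, j1) (s2, j2) (S.zip J) g) (hlen : S.length = J.length) (B : List Bool)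
    (Q : List St) :
    GrowthStep ((A ++ s1 :: s2 :: B).zip (P ++ j1 :: j2 :: Q)) ((A ++ (S ++ B)).zip (P ++ (J ++ Q)))
      (shift^[A.length] g) := by
  have hA : (A.zip P).length = A.length := by rw [List.length_zip, ← hl, min_self]
  rw [List.zip_append hl, List.zip_append hl, List.zip_append hlen, ← hA]
  exact (GrowthStep.head h (B.zip Q)).append_left (A.zip P)

end Executions

lemma isWebTensor_web {S : List Bool} {J : List St} (e : Exec S J) :
    IsWebTensor (S.zip J) (web e) := by
  induction e with
  | nil =>
    have : web Exec.nil = fun L => if L = [] then 1 else 0 := by ext L; rw [web]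
    rw [this]
    exact .refl
  | hstep A B P Q s1 s2 j1 j2 j1' j2' hl hs hp e ih =>
    obtain rfl : s2 = !s1 := Bool.eq_not.mpr hs.symm
    rw [web_hstep]
    simp only [Bool.not_not] at ih
    exact .step
      ((LocalRule.ladder s1 hp).growthStep_zip hl (S := [!s1, s1]) (J := [j1', j2']) rfl B Q) ih
  | ustep A B P Q s1 s2 hl hs e ih =>
    obtain rfl : s2 = !s1 := Bool.eq_not.mpr hs.symm
    rw [web_ustep]
    exact .step ((LocalRule.cup s1).growthStep_zip hl (S := []) (J := []) rfl B Q) ih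
  | ystep A B P Q s j1 j2 j' hl hp e ih =>
    rw [web_ystep]
    exact .step ((LocalRule.fork s hp).growthStep_zip hl (S := [!s]) (J := [j']) rfl B Q) ih

/-- the web tensor does not depend on the order in which the
growth rules are applied. -/
theorem web_well_defined (S : List Bool) (J : List St) (e₁ e₂ : Exec S J) :
    web e₁ = web e₂ :=
  (isWebTensor_web e₁).unique (isWebTensor_web e₂)

end
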